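/- For every natural number m ≥ 0, the integral ∫_{0}^{1} log(1/w − 1) · w^m dw equals −H(m) / (m+1). -/

import Mathlib

open Real MeasureTheory

/-- The `m`-th harmonic number `H(m) = ∑_{i=1}^{m} 1/i`, with `H(0) = 0`. -/
noncomputable def H (m : ℕ) : ℝ := ∑ i ∈ Finset.range m, (1 : ℝ) / (i + 1)

/-- For every natural number `m`, `∫_{0}^{1} log(1/w − 1) · w^m dw = −H(m) / (m+1)`. -/
theorem integral_log_inv_sub_one_mul_pow (m : ℕ) :
    (∫ w in Set.Ioo (0 : ℝ) 1, Real.log (1 / w - 1) * w ^ m) =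
      -H m / ((m : ℝ) + 1) := by
  have hm : (m : ℝ) + 1 ≠ 0 := by positivity
  have e1 : (∫ w in Set.Ioo (0 : ℝ) 1, Real.log (1 / w - 1) * w ^ m) =
      ∫ w in Set.Ioo (0 : ℝ) 1, (Real.log (1 - w) - Real.log w) * w ^ m := by
    refine setIntegral_congr_fun measurableSet_Ioo ?_
    intro w hw
    have h0 : w ≠ 0 := hw.1.ne'
    have h1 : 1 - w ≠ 0 := (sub_pos.2 hw.2).ne'
    have : 1 / w - 1 = (1 - w) / w := by field_simp
    simp only [this, Real.log_div h1 h0]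
  rw [e1, ← integral_Ioc_eq_integral_Ioo, ← intervalIntegral.integral_of_le zero_le_one]
  have hint : IntervalIntegrable (fun w : ℝ => (Real.log (1 - w) - Real.log w) * w ^ m)
      volume 0 1 := by
    refine IntervalIntegrable.mul_continuousOn (IntervalIntegrable.sub ?_ ?_) (by fun_prop)
    · have h := (intervalIntegral.intervalIntegrable_log' (a := 1) (b := 0)).comp_sub_left 1
      simpa using h
    · exact intervalIntegral.intervalIntegrable_log'
  let F : ℝ → ℝ := fun w => (-(∑ i ∈ Finset.range (m + 1), w ^ i) * ((1 - w) * Real.log (1 - w))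
    - w ^ m * (w * Real.log w) - ∑ i ∈ Finset.range m, w ^ (i + 1) / ((i : ℝ) + 1)) / ((m : ℝ) + 1)
  have hF : Continuous F := by
    have c1 : Continuous fun w : ℝ => w * Real.log w := Real.continuous_mul_log
    have c2 : Continuous fun w : ℝ => (1 - w) * Real.log (1 - w) :=
      c1.comp (continuous_const.sub continuous_id)
    have c3 : Continuous fun w : ℝ => ∑ i ∈ Finset.range (m + 1), w ^ i := by fun_prop
    have c4 : Continuous fun w : ℝ => ∑ i ∈ Finset.range m, w ^ (i + 1) / ((i : ℝ) + 1) := by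
      fun_prop
    exact (((c3.neg.mul c2).sub ((continuous_pow m).mul c1)).sub c4).div_const _
  have hd : ∀ w ∈ Set.Ioo (0 : ℝ) 1,
      HasDerivAt F ((Real.log (1 - w) - Real.log w) * w ^ m) w := by
    intro w hw
    have h0 : w ≠ 0 := hw.1.ne'
    have h1 : 1 - w ≠ 0 := (sub_pos.2 hw.2).ne'
    have hFG : F = fun w => ((w ^ (m + 1) - 1) * Real.log (1 - w) - w ^ (m + 1) * Real.log w
        - ∑ i ∈ Finset.range m, w ^ (i + 1) / ((i : ℝ) + 1)) / ((m : ℝ) + 1) := by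
      funext x
      have hg := geom_sum_mul x (m + 1)
      simp only [F]
      rw [← hg]
      ring
    rw [hFG]
    have d4 : HasDerivAt (fun w : ℝ => ∑ i ∈ Finset.range m, w ^ (i + 1) / ((i : ℝ) + 1))
        (∑ i ∈ Finset.range m, w ^ i) w := by
      refine HasDerivAt.fun_sum fun i _ => ?_
      have hi : (i : ℝ) + 1 ≠ 0 := by positivity
      have := (hasDerivAt_pow (i + 1) w).div_const ((i : ℝ) + 1)
      refine this.congr_deriv ?_
      rw [Nat.add_sub_cancel]
      push_cast
      field_simp
    have dp := hasDerivAt_pow (m + 1) w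
    have dl : HasDerivAt (fun w : ℝ => Real.log (1 - w)) (-1 / (1 - w)) w :=
      ((hasDerivAt_id w).const_sub 1).log h1
    have := ((((dp.sub_const 1).mul dl).sub (dp.mul (Real.hasDerivAt_log h0))).sub d4).div_const
      ((m : ℝ) + 1)
    refine this.congr_deriv ?_
    have hg := geom_sum_mul w (m + 1)
    rw [Finset.sum_range_succ] at hg
    have hs : ∑ i ∈ Finset.range m, w ^ i = (w ^ (m + 1) - 1) * (-1 / (1 - w)) - w ^ m := by
      rw [← hg]
      field_simp
      ring
    rw [hs]
    push_cast
    field_simp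
    ring
  rw [intervalIntegral.integral_eq_sub_of_hasDerivAt_of_le zero_le_one hF.continuousOn hd hint]
  simp [F, H]
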